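/- In the conditioned n-bit majority MDP: suppose A ⊆ {1, …, n} is such that C(x) = true for every x ∈ {0,1}^n with x_i = (s_reward)_i for all i ∉ A. Then for every x ∈ {0,1}^n with x_i = (s_reward)_i for all i ∉ A, the optimal value satisfies V*((0_b, x)) = n + 1 − d(x, s_reward) = n + 1 − #{i ∈ A : x_i ≠ (s_reward)_i}. -/

import Mathlib

/-!
Write `n = 2^b − 1` and `d = d(x, s_reward)`. At any time `t` the state is `(f^(p)(0_b), y)`, where
`p` counts the control advances so far and `t - p` the flips.

*Upper bound* (`traj_lower`, `le_of_iterate_eq_one`). Each flip lowers the distance to `s_reward` by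
at most one. By counting, the iterates `f^(k)(0_b)`, `1 ≤ k ≤ n`, are pairwise distinct, and as
`1_b` is a fixed point it can only be the last of them, so `f^(p)(0_b) = 1_b` forces `p ≥ n`. Hence a
rewarded time (counted from `0`) is at least `n + d`, and at most `2^b + n - (n + d) = n + 1 - d` of
the time steps are rewarded.

*Lower bound* (`greedy_inv`, `greedy_reward`). The greedy policy flips exactly when the bit addressed
by the control string is wrong. It never touches a bit outside `A`, so `C` stays true, and each flip
lowers the distance by exactly one. Since the control strings address every bit
(`exists_bitVal_eq`), all bits are right and the control string is `1_b` from time `n + d` on.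
-/

/-- The all-false (all-zero) bit string of length `ℓ`. -/
def zeroStr (ℓ : ℕ) : Fin ℓ → Bool := fun _ => false

/-- The all-true (all-one) bit string of length `ℓ`. -/
def oneStr (ℓ : ℕ) : Fin ℓ → Bool := fun _ => true

/-- `f` is a control function over `{0,1}^b`: it fixes the all-one string, and the
iterates `f^(k)(0_b)` for `k = 1, …, 2^b − 1` cover exactly `{0,1}^b ∖ {0_b}`. -/
def IsControlFunc (b : ℕ) (f : (Fin b → Bool) → (Fin b → Bool)) : Prop :=
  f (oneStr b) = oneStr b ∧
    (fun k => f^[k] (zeroStr b)) '' Set.Icc 1 (2 ^ b - 1) = {v | v ≠ zeroStr b}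

/-- The value of a length-`b` bit string as a most-significant-bit-first binary number. -/
def bitVal {b : ℕ} (c : Fin b → Bool) : ℕ :=
  ∑ j : Fin b, if c j then 2 ^ (b - 1 - (j : ℕ)) else 0

/-- The Hamming distance between two bit strings. -/
def hammDist {n : ℕ} (x y : Fin n → Bool) : ℕ :=
  (Finset.univ.filter fun i => x i ≠ y i).card

/-- The transition of the conditioned `n`-bit majority MDP (`n = 2^b − 1`): on
action `1` with nonzero control bits and satisfied condition `C`, flip the
`val(c)`-th (1-indexed) representation bit; otherwise apply the control function
to the control bits. -/
def majStepC (b : ℕ) (f : (Fin b → Bool) → (Fin b → Bool))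
    (C : (Fin (2 ^ b - 1) → Bool) → Bool)
    (s : (Fin b → Bool) × (Fin (2 ^ b - 1) → Bool)) (a : Bool) :
    (Fin b → Bool) × (Fin (2 ^ b - 1) → Bool) :=
  if a = true ∧ s.1 ≠ zeroStr b ∧ C s.2 = true then
    (s.1, fun i => if (i : ℕ) + 1 = bitVal s.1 then !(s.2 i) else s.2 i)
  else (f s.1, s.2)

/-- The trajectory induced by an action sequence `a`: `majTrajC b f C s a 0 = s`
(this is `s_1`) and `majTrajC b f C s a t` is the state `s_{t+1}`. -/
def majTrajC (b : ℕ) (f : (Fin b → Bool) → (Fin b → Bool))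
    (C : (Fin (2 ^ b - 1) → Bool) → Bool)
    (s : (Fin b → Bool) × (Fin (2 ^ b - 1) → Bool)) (a : ℕ → Bool) :
    ℕ → (Fin b → Bool) × (Fin (2 ^ b - 1) → Bool)
  | 0 => s
  | t + 1 => majStepC b f C (majTrajC b f C s a t) (a t)

/-- The optimal value of the conditioned majority MDP with horizon `H = 2^b + n`:
the maximal, over action sequences, number of time steps `t ∈ {1, …, H}` with
`s_t = (1_b, s_reward)`. -/
noncomputable def majVC (b : ℕ) (f : (Fin b → Bool) → (Fin b → Bool))
    (C : (Fin (2 ^ b - 1) → Bool) → Bool) (sr : Fin (2 ^ b - 1) → Bool)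
    (s : (Fin b → Bool) × (Fin (2 ^ b - 1) → Bool)) : ℕ :=
  sSup {v | ∃ a : ℕ → Bool,
    v = ((Finset.range (2 ^ b + (2 ^ b - 1))).filter
          fun t => majTrajC b f C s a t = (oneStr b, sr)).card}

/-! ### Binary values and control functions -/

lemma sum_testBit (m b : ℕ) :
    ∑ j ∈ Finset.range b, (if m.testBit j then 2 ^ j else 0) = m % 2 ^ b := by
  induction b with
  | zero => simp [Nat.mod_one]
  | succ b ih =>
    rw [Finset.sum_range_succ, ih, Nat.mod_pow_succ, Nat.testBit_eq_decide_div_mod_eq]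
    rcases Nat.mod_two_eq_zero_or_one (m / 2 ^ b) with h | h <;> simp [h]

lemma exists_bitVal_eq {b m : ℕ} (hm : m < 2 ^ b) : ∃ c : Fin b → Bool, bitVal c = m := by
  refine ⟨fun j => m.testBit (b - 1 - j), ?_⟩
  have h := sum_testBit m b
  rw [Nat.mod_eq_of_lt hm, ← Finset.sum_range_reflect, Finset.sum_range] at h
  exact h

lemma bitVal_zeroStr (b : ℕ) : bitVal (zeroStr b) = 0 := by
  simp [bitVal, zeroStr]

lemma oneStr_ne_zeroStr {b : ℕ} (hb : 1 ≤ b) : oneStr b ≠ zeroStr b := fun h => by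
  simpa [oneStr, zeroStr] using congrFun h ⟨0, hb⟩

/-- The `2^b - 1` iterates cover a set of `2^b - 1` strings, so they are pairwise distinct. -/
lemma iterate_injOn {b : ℕ} {f : (Fin b → Bool) → (Fin b → Bool)} (hf : IsControlFunc b f) :
    Set.InjOn (fun k => f^[k] (zeroStr b)) (Finset.Icc 1 (2 ^ b - 1) : Finset ℕ) := by
  apply Finset.injOn_of_card_image_eq
  have h : (Finset.Icc 1 (2 ^ b - 1)).image (fun k => f^[k] (zeroStr b))
      = Finset.univ.erase (zeroStr b) := by
    apply Finset.coe_injective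
    rw [Finset.coe_image, Finset.coe_Icc, hf.2]
    ext v
    simp
  rw [h, Finset.card_erase_of_mem (Finset.mem_univ _)]
  simp

lemma iterate_eq_one_of_le {b : ℕ} {f : (Fin b → Bool) → (Fin b → Bool)}
    (hf : IsControlFunc b f) {k m : ℕ} (hk : f^[k] (zeroStr b) = oneStr b) (hkm : k ≤ m) :
    f^[m] (zeroStr b) = oneStr b := by
  obtain ⟨r, rfl⟩ := Nat.exists_eq_add_of_le' hkm
  rw [Function.iterate_add_apply, hk]
  exact Function.iterate_fixed hf.1 r

lemma le_of_iterate_eq_one {b : ℕ} (hb : 1 ≤ b) {f : (Fin b → Bool) → (Fin b → Bool)}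
    (hf : IsControlFunc b f) {p : ℕ} (hp : f^[p] (zeroStr b) = oneStr b) : 2 ^ b - 1 ≤ p := by
  by_contra! hlt
  have hp0 : 1 ≤ p := by
    rcases Nat.eq_zero_or_pos p with rfl | h
    · exact absurd hp.symm (oneStr_ne_zeroStr hb)
    · exact h
  have h1 := iterate_eq_one_of_le hf hp (Nat.le_succ p)
  have := iterate_injOn hf (x₁ := p) (x₂ := p + 1) (by simp; omega) (by simp; omega)
    (hp.trans h1.symm)
  omega

lemma iterate_eq_one {b : ℕ} (hb : 1 ≤ b) {f : (Fin b → Bool) → (Fin b → Bool)}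
    (hf : IsControlFunc b f) {p : ℕ} (hp : 2 ^ b - 1 ≤ p) : f^[p] (zeroStr b) = oneStr b := by
  have h : oneStr b ∈ {v | v ≠ zeroStr b} := oneStr_ne_zeroStr hb
  rw [← hf.2] at h
  obtain ⟨k, hk, hk1⟩ := h
  exact iterate_eq_one_of_le hf hk1 (hk.2.trans hp)

/-- Every representation bit is addressed by one of the iterates `f^(k)(0_b)` with `k ≤ 2^b - 1`. -/
lemma exists_iterate_addr {b : ℕ} {f : (Fin b → Bool) → (Fin b → Bool)}
    (hf : IsControlFunc b f) (i : Fin (2 ^ b - 1)) :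
    ∃ k ≤ 2 ^ b - 1, (i : ℕ) + 1 = bitVal (f^[k] (zeroStr b)) := by
  obtain ⟨c, hc⟩ := exists_bitVal_eq (b := b) (m := i + 1) (by omega)
  have h : c ∈ {v | v ≠ zeroStr b} := by
    rintro rfl
    rw [bitVal_zeroStr] at hc
    omega
  rw [← hf.2] at h
  obtain ⟨k, hk, rfl⟩ := h
  exact ⟨k, hk.2, hc.symm⟩

/-! ### Hamming distance under a single flip -/

lemma hammDist_eq_zero {n : ℕ} {x y : Fin n → Bool} : hammDist x y = 0 ↔ x = y := by
  simp [hammDist, Finset.filter_eq_empty_iff, funext_iff]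

lemma hammDist_le_flip {n : ℕ} (y s : Fin n → Bool) (v : ℕ) :
    hammDist y s ≤ hammDist (fun i => if (i : ℕ) + 1 = v then !(y i) else y i) s + 1 := by
  unfold hammDist
  by_cases hv : ∃ j : Fin n, (j : ℕ) + 1 = v
  · obtain ⟨j, rfl⟩ := hv
    refine le_trans (Finset.card_le_card ?_) (Finset.card_insert_le j _)
    intro i hi
    simp only [Finset.mem_insert, Finset.mem_filter, Finset.mem_univ, true_and] at hi ⊢
    by_cases hij : i = j
    · exact Or.inl hij
    · right
      rwa [if_neg (by rw [Fin.ext_iff] at hij; omega)]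
  · push Not at hv
    simp [hv]

lemma hammDist_flip_wrong {n : ℕ} (y s : Fin n → Bool) (j : Fin n) (hj : y j ≠ s j) :
    hammDist (fun i : Fin n => if (i : ℕ) + 1 = j + 1 then !(y i) else y i) s + 1
      = hammDist y s := by
  unfold hammDist
  rw [← Finset.card_erase_add_one (a := j) (s := Finset.univ.filter fun i => y i ≠ s i)
    (by simpa using hj)]
  congr 2
  ext i
  simp only [Finset.mem_erase, Finset.mem_filter, Finset.mem_univ, true_and]
  by_cases hij : i = j
  · subst hij
    revert hj
    cases y i <;> cases s i <;> simp
  · rw [if_neg (by rw [Fin.ext_iff] at hij; omega)]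
    simp [hij]

/-! ### Upper bound -/

/-- After `t` steps of which `p` advance the control string, the `t - p` others are flips, and each
of them lowers the distance to `sr` by at most one. -/
lemma traj_lower (b : ℕ) (f : (Fin b → Bool) → (Fin b → Bool))
    (C : (Fin (2 ^ b - 1) → Bool) → Bool) (sr x : Fin (2 ^ b - 1) → Bool) (a : ℕ → Bool) (t : ℕ) :
    ∃ p, (majTrajC b f C (zeroStr b, x) a t).1 = f^[p] (zeroStr b) ∧
      p + hammDist x sr ≤ t + hammDist (majTrajC b f C (zeroStr b, x) a t).2 sr := by
  induction t with
  | zero => exact ⟨0, rfl, by simp [majTrajC]⟩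
  | succ t ih =>
    obtain ⟨p, hp, hd⟩ := ih
    simp only [majTrajC]
    generalize majTrajC b f C (zeroStr b, x) a t = s at hp hd
    unfold majStepC
    split_ifs
    · refine ⟨p, hp, ?_⟩
      have := hammDist_le_flip s.2 sr (bitVal s.1)
      dsimp only
      omega
    · refine ⟨p + 1, ?_, ?_⟩
      · rw [Function.iterate_succ_apply', ← hp]
      · dsimp only
        omega

lemma reward_time_ge {b : ℕ} (hb : 1 ≤ b) {f : (Fin b → Bool) → (Fin b → Bool)}
    (hf : IsControlFunc b f) {C : (Fin (2 ^ b - 1) → Bool) → Bool}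
    {sr x : Fin (2 ^ b - 1) → Bool} {a : ℕ → Bool} {t : ℕ}
    (ht : majTrajC b f C (zeroStr b, x) a t = (oneStr b, sr)) :
    2 ^ b - 1 + hammDist x sr ≤ t := by
  obtain ⟨p, hp, hd⟩ := traj_lower b f C sr x a t
  rw [ht] at hp hd
  have h0 : hammDist sr sr = 0 := hammDist_eq_zero.2 rfl
  have := le_of_iterate_eq_one hb hf hp.symm
  dsimp only at hd
  omega

/-! ### The greedy policy -/

open Classical in
/-- The greedy policy: flip exactly when the addressed bit differs from its target value. -/
noncomputable def greedyAct (b : ℕ) (sr : Fin (2 ^ b - 1) → Bool)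
    (s : (Fin b → Bool) × (Fin (2 ^ b - 1) → Bool)) : Bool :=
  decide (∃ i : Fin (2 ^ b - 1), (i : ℕ) + 1 = bitVal s.1 ∧ s.2 i ≠ sr i)

/-- The state reached from `s` after `t` steps of the greedy policy. -/
noncomputable def greedyState (b : ℕ) (f : (Fin b → Bool) → (Fin b → Bool))
    (C : (Fin (2 ^ b - 1) → Bool) → Bool) (sr : Fin (2 ^ b - 1) → Bool)
    (s : (Fin b → Bool) × (Fin (2 ^ b - 1) → Bool)) (t : ℕ) :
    (Fin b → Bool) × (Fin (2 ^ b - 1) → Bool) :=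
  (fun u => majStepC b f C u (greedyAct b sr u))^[t] s

lemma traj_greedy (b : ℕ) (f : (Fin b → Bool) → (Fin b → Bool))
    (C : (Fin (2 ^ b - 1) → Bool) → Bool) (sr : Fin (2 ^ b - 1) → Bool)
    (s : (Fin b → Bool) × (Fin (2 ^ b - 1) → Bool)) (t : ℕ) :
    majTrajC b f C s (fun t => greedyAct b sr (greedyState b f C sr s t)) t
      = greedyState b f C sr s t := by
  induction t with
  | zero => rfl
  | succ t ih =>
    simp only [majTrajC, ih]
    rw [greedyState, greedyState, Function.iterate_succ_apply']

/-- After `t` greedy steps, `p` of them advances: all flips so far were useful, the bits outside `A`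
are still right, and so are all bits addressed before the current control string. -/
lemma greedy_inv (b : ℕ) (f : (Fin b → Bool) → (Fin b → Bool))
    (sr : Fin (2 ^ b - 1) → Bool) (C : (Fin (2 ^ b - 1) → Bool) → Bool)
    (A : Finset (Fin (2 ^ b - 1)))
    (hA : ∀ x : Fin (2 ^ b - 1) → Bool, (∀ i ∉ A, x i = sr i) → C x = true)
    (x : Fin (2 ^ b - 1) → Bool) (hx : ∀ i ∉ A, x i = sr i) (t : ℕ) :
    ∃ p, (greedyState b f C sr (zeroStr b, x) t).1 = f^[p] (zeroStr b) ∧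
      t + hammDist (greedyState b f C sr (zeroStr b, x) t).2 sr = p + hammDist x sr ∧
      (∀ i ∉ A, (greedyState b f C sr (zeroStr b, x) t).2 i = sr i) ∧
      ∀ k < p, ∀ i : Fin (2 ^ b - 1), (i : ℕ) + 1 = bitVal (f^[k] (zeroStr b)) →
        (greedyState b f C sr (zeroStr b, x) t).2 i = sr i := by
  induction t with
  | zero => exact ⟨0, rfl, rfl, hx, by simp⟩
  | succ t ih =>
    obtain ⟨p, hp, hd, hout, hdone⟩ := ih
    have hs : greedyState b f C sr (zeroStr b, x) (t + 1)
        = majStepC b f C (greedyState b f C sr (zeroStr b, x) t)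
          (greedyAct b sr (greedyState b f C sr (zeroStr b, x) t)) := by
      rw [greedyState, Function.iterate_succ_apply']
      rfl
    rw [hs]
    generalize greedyState b f C sr (zeroStr b, x) t = s at hp hd hout hdone
    by_cases hw : ∃ i : Fin (2 ^ b - 1), (i : ℕ) + 1 = bitVal s.1 ∧ s.2 i ≠ sr i
    · have hact : greedyAct b sr s = true := by simpa [greedyAct] using hw
      obtain ⟨j, hj, hne⟩ := hw
      have hc : s.1 ≠ zeroStr b := by
        intro h
        rw [h, bitVal_zeroStr] at hj
        omega
      rw [majStepC, if_pos ⟨hact, hc, hA _ hout⟩, ← hj]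
      -- A flip at the wrong bit `j` keeps every right bit right.
      have hkeep : ∀ i : Fin (2 ^ b - 1), s.2 i = sr i →
          (if (i : ℕ) + 1 = j + 1 then !(s.2 i) else s.2 i) = sr i := by
        intro i hi
        have hij : i ≠ j := by
          rintro rfl
          exact hne hi
        rw [if_neg (by rw [Ne, Fin.ext_iff] at hij; omega), hi]
      have := hammDist_flip_wrong s.2 sr j hne
      refine ⟨p, hp, ?_, fun i hi => hkeep i (hout i hi),
        fun k hk i hi => hkeep i (hdone k hk i hi)⟩
      dsimp only
      omega
    · have hact : greedyAct b sr s = false := by simpa [greedyAct] using hw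
      rw [majStepC, if_neg (by simp [hact])]
      refine ⟨p + 1, ?_, ?_, hout, ?_⟩
      · rw [Function.iterate_succ_apply', ← hp]
      · dsimp only
        omega
      · intro k hk i hi
        rcases Nat.lt_succ_iff_lt_or_eq.1 hk with hk | rfl
        · exact hdone k hk i hi
        · by_contra hne
          exact hw ⟨i, by rw [hp, hi], hne⟩

lemma greedy_reward {b : ℕ} (hb : 1 ≤ b)
    {f : (Fin b → Bool) → (Fin b → Bool)} (hf : IsControlFunc b f)
    {sr : Fin (2 ^ b - 1) → Bool} {C : (Fin (2 ^ b - 1) → Bool) → Bool}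
    {A : Finset (Fin (2 ^ b - 1))}
    (hA : ∀ x : Fin (2 ^ b - 1) → Bool, (∀ i ∉ A, x i = sr i) → C x = true)
    {x : Fin (2 ^ b - 1) → Bool} (hx : ∀ i ∉ A, x i = sr i) {t : ℕ}
    (ht : 2 ^ b - 1 + hammDist x sr ≤ t) :
    greedyState b f C sr (zeroStr b, x) t = (oneStr b, sr) := by
  obtain ⟨p, hp, hd, -, hdone⟩ := greedy_inv b f sr C A hA x hx t
  refine Prod.ext (hp.trans (iterate_eq_one hb hf (by omega))) ?_
  -- Here `p ≥ n`: if `p = n` the distance is already `0`, otherwise every bit has been passed.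
  rcases Nat.lt_or_ge (2 ^ b - 1) p with hlt | hge
  · funext i
    obtain ⟨k, hk, hki⟩ := exists_iterate_addr hf i
    exact hdone k (by omega) i hki
  · refine hammDist_eq_zero.1 ?_
    dsimp only
    omega

/-- If `C(x) = true` for every `x` agreeing with `s_reward` outside `A`, then for any
such `x` the optimal value is `V*((0_b, x)) = n + 1 − d(x, s_reward)
= n + 1 − #{i ∈ A : x_i ≠ (s_reward)_i}`, where `n = 2^b − 1`. -/
theorem majMDPC_value (b : ℕ) (hb : 1 ≤ b)
    (f : (Fin b → Bool) → (Fin b → Bool)) (hf : IsControlFunc b f)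
    (sr : Fin (2 ^ b - 1) → Bool) (C : (Fin (2 ^ b - 1) → Bool) → Bool)
    (A : Finset (Fin (2 ^ b - 1)))
    (hA : ∀ x : Fin (2 ^ b - 1) → Bool, (∀ i ∉ A, x i = sr i) → C x = true)
    (x : Fin (2 ^ b - 1) → Bool) (hx : ∀ i ∉ A, x i = sr i) :
    majVC b f C sr (zeroStr b, x) = (2 ^ b - 1) + 1 - hammDist x sr ∧
    majVC b f C sr (zeroStr b, x)
      = (2 ^ b - 1) + 1 - (A.filter fun i => x i ≠ sr i).card := by
  have hcard : (A.filter fun i => x i ≠ sr i).card = hammDist x sr := by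
    unfold hammDist
    congr 1
    ext i
    simp only [Finset.mem_filter, Finset.mem_univ, true_and, and_iff_right_iff_imp]
    intro h
    by_contra hi
    exact h (hx i hi)
  have hmain : majVC b f C sr (zeroStr b, x) = (2 ^ b - 1) + 1 - hammDist x sr := by
    have hpow : 1 ≤ 2 ^ b := Nat.one_le_two_pow
    -- The time steps from `n + d` on, which contain every rewarded one.
    have hIco : (Finset.Ico (2 ^ b - 1 + hammDist x sr) (2 ^ b + (2 ^ b - 1))).card
        = (2 ^ b - 1) + 1 - hammDist x sr := by
      rw [Nat.card_Ico]
      omega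
    refine IsGreatest.csSup_eq ⟨?_, ?_⟩
    · refine ⟨fun t => greedyAct b sr (greedyState b f C sr (zeroStr b, x) t), ?_⟩
      rw [← hIco]
      congr 1
      ext t
      simp only [Finset.mem_Ico, Finset.mem_filter, Finset.mem_range]
      constructor
      · rintro ⟨h1, h2⟩
        exact ⟨h2, by rw [traj_greedy]; exact greedy_reward hb hf hA hx h1⟩
      · rintro ⟨h1, h2⟩
        exact ⟨reward_time_ge hb hf h2, h1⟩
    · rintro v ⟨a, rfl⟩
      rw [← hIco]
      refine Finset.card_le_card fun t ht => ?_
      rw [Finset.mem_filter, Finset.mem_range] at ht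
      exact Finset.mem_Ico.2 ⟨reward_time_ge hb hf ht.2, ht.1⟩
  exact ⟨hmain, by rw [hcard, hmain]⟩
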